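/- For every integer n ≥ 0, the functions z φ_{5/2+n,1}(z) and z φ_{5/2+n,−1}(z) (that is, z𝒥_{3/2+n} and z𝓘_{3/2+n}, where 𝒥_ν = φ_{ν+1,1} and 𝓘_ν = φ_{ν+1,−1} are the normalized Bessel and modified Bessel functions of order ν) belong to the class S*_e. -/

import Mathlib

/-!
Writing `f z = z * φ z`, one has `z f' / f = 1 + z φ' / φ`. For `κ = 5/2 + n` and `|c| = 1` the
coefficients of `φ` are bounded by `(1/10)^k`, because `|(κ)_k| ≥ (5/2)^k` and `k! ≥ 1`. So
`|φ - 1| ≤ 1/4` on the disk of radius `2`; Cauchy's estimate on circles of radius `1` gives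
`|φ'| ≤ 1/4` on the unit disk. There `|z φ' / φ| ≤ (1/4) / (3/4) = 1/3`, and the principal
logarithm of `1 + u` with `|u| ≤ 1/3` has modulus at most `1/2 < 1`. These estimates are carried by
`norm_tsum_sub_one_le` and `isSe_of_coeff_bound`; the coefficient bound is `besselCoeff_bound`.
-/

open Complex Set

def unitDisk : Set ℂ := Metric.ball 0 1

def expD : Set ℂ := Complex.exp '' unitDisk

/-- The generalized and normalized Bessel function
`φ_{κ,c}(z) = ∑ ((-c/4)^n / ((κ)_n n!)) zⁿ`. -/
noncomputable def besselPhi (κ c : ℂ) (z : ℂ) : ℂ :=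
  ∑' n : ℕ, ((-c / 4) ^ n / ((ascPochhammer ℂ n).eval κ * (n.factorial : ℂ))) * z ^ n

/-- Membership in the class `S*_e` of exponential starlike functions. -/
def IsSe (f : ℂ → ℂ) : Prop :=
  AnalyticOnNhd ℂ f unitDisk ∧ f 0 = 0 ∧ deriv f 0 = 1 ∧
    ∀ z ∈ unitDisk \ {0}, f z ≠ 0 ∧ z * deriv f z / f z ∈ expD

theorem norm_term_le {a : ℕ → ℂ} (ha : ∀ k, ‖a k‖ ≤ (1 / 10 : ℝ) ^ k) (k : ℕ) {z : ℂ}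
    (hz : z ∈ Metric.ball (0 : ℂ) 2) : ‖a k * z ^ k‖ ≤ (1 / 5 : ℝ) ^ k := by
  have hz' : ‖z‖ ≤ 2 := by simpa using (mem_ball_zero_iff.mp hz).le
  calc ‖a k * z ^ k‖ = ‖a k‖ * ‖z‖ ^ k := by rw [norm_mul, norm_pow]
    _ ≤ (1 / 10 : ℝ) ^ k * 2 ^ k := by gcongr; exact ha k
    _ = (1 / 5 : ℝ) ^ k := by rw [← mul_pow]; norm_num

theorem summable_fifth : Summable (fun k : ℕ => (1 / 5 : ℝ) ^ k) :=
  summable_geometric_of_lt_one (by norm_num) (by norm_num)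

theorem differentiableOn_tsum_of_coeff {a : ℕ → ℂ} (ha : ∀ k, ‖a k‖ ≤ (1 / 10 : ℝ) ^ k) :
    DifferentiableOn ℂ (fun z => ∑' k, a k * z ^ k) (Metric.ball (0 : ℂ) 2) :=
  differentiableOn_tsum_of_summable_norm summable_fifth
    (fun k => by fun_prop) Metric.isOpen_ball (fun k _ hz => norm_term_le ha k hz)

/-- The constant is the geometric tail `∑_{k ≥ 1} (2/10)^k = 1/4`. -/
theorem norm_tsum_sub_one_le {a : ℕ → ℂ} (ha : ∀ k, ‖a k‖ ≤ (1 / 10 : ℝ) ^ k) (h0 : a 0 = 1)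
    {z : ℂ} (hz : z ∈ Metric.ball (0 : ℂ) 2) : ‖(∑' k, a k * z ^ k) - 1‖ ≤ 1 / 4 := by
  have hs : Summable (fun k => a k * z ^ k) :=
    Summable.of_norm_bounded summable_fifth (fun k => norm_term_le ha k hz)
  rw [hs.tsum_eq_zero_add, h0]
  simp only [pow_zero, mul_one, add_sub_cancel_left]
  have hg : HasSum (fun k : ℕ => (1 / 5 : ℝ) ^ (k + 1)) (1 / 4) := by
    have := (hasSum_geometric_of_lt_one (r := (1 / 5 : ℝ)) (by norm_num) (by norm_num)).mul_right
      (1 / 5)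
    have h4 : (1 - 1 / 5 : ℝ)⁻¹ * (1 / 5) = 1 / 4 := by norm_num
    rw [h4] at this
    simpa only [pow_succ] using this
  exact tsum_of_norm_bounded hg (fun k => norm_term_le ha (k + 1) hz)

theorem one_add_mem_expD {u : ℂ} (hu : ‖u‖ ≤ 1 / 3) : 1 + u ∈ expD := by
  have hne : 1 + u ≠ 0 := by
    intro h
    have : u = -1 := by linear_combination h
    rw [this] at hu
    norm_num at hu
  refine ⟨Complex.log (1 + u), ?_, Complex.exp_log hne⟩
  have := Complex.norm_log_one_add_half_le_self (z := u) (by linarith)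
  rw [unitDisk, mem_ball_zero_iff]
  linarith

/-- Any power series `g` with constant term `1` and coefficients at most `(1/10)^k` in modulus
yields a function `z * g z` in `S*_e`. -/
theorem isSe_of_coeff_bound {a : ℕ → ℂ} (ha : ∀ k, ‖a k‖ ≤ (1 / 10 : ℝ) ^ k) (h0 : a 0 = 1) :
    IsSe (fun z => z * ∑' k, a k * z ^ k) := by
  have hd := differentiableOn_tsum_of_coeff ha
  have hb := fun z hz => norm_tsum_sub_one_le ha h0 (z := z) hz
  have hg0 : (∑' k, a k * (0 : ℂ) ^ k) = 1 := by
    rw [tsum_eq_single 0 (fun k hk => by simp [hk])]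
    simp [h0]
  generalize hg : (fun z : ℂ => ∑' k, a k * z ^ k) = g at hd
  have hgz : ∀ z, (∑' k, a k * z ^ k) = g z := fun z => congrFun hg z
  simp only [hgz] at hb hg0 ⊢
  have hsub : unitDisk ⊆ Metric.ball (0 : ℂ) 2 := Metric.ball_subset_ball (by norm_num)
  have hda : ∀ z ∈ unitDisk, DifferentiableAt ℂ g z := fun z hz =>
    hd.differentiableAt (Metric.isOpen_ball.mem_nhds (hsub hz))
  have hderiv : ∀ z ∈ unitDisk, deriv (fun z => z * g z) z = g z + z * deriv g z := by
    intro z hz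
    have h : HasDerivAt (fun z => z * g z) (1 * g z + z * deriv g z) z :=
      (hasDerivAt_id z).mul (hda z hz).hasDerivAt
    simpa using h.deriv
  have h0mem : (0 : ℂ) ∈ unitDisk := by simp [unitDisk]
  refine ⟨?_, by simp, ?_, ?_⟩
  · exact (differentiableOn_id.mul (hd.mono hsub)).analyticOnNhd Metric.isOpen_ball
  · rw [hderiv 0 h0mem, hg0]
    simp
  · rintro z ⟨hz, hz0⟩
    have hz0 : z ≠ 0 := hz0
    have hz1 : ‖z‖ < 1 := mem_ball_zero_iff.mp hz
    have hlow : 3 / 4 ≤ ‖g z‖ := by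
      have h1 := hb z (hsub hz)
      have h2 := norm_sub_norm_le (1 : ℂ) (g z)
      rw [norm_sub_rev, norm_one] at h2
      linarith
    have hgne : g z ≠ 0 := norm_pos_iff.mp (by linarith)
    have hcl : Metric.closedBall z 1 ⊆ Metric.ball (0 : ℂ) 2 := by
      intro w hw
      rw [mem_closedBall_iff_norm] at hw
      rw [mem_ball_zero_iff]
      have := norm_le_norm_sub_add w z
      linarith
    have hg' : ‖deriv g z‖ ≤ 1 / 4 := by
      have hdc : DiffContOnCl ℂ (fun w => g w - 1) (Metric.ball z 1) :=
        ((hd.mono hcl).sub_const 1).diffContOnCl_ball (subset_refl _)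
      have := Complex.norm_deriv_le_of_forall_mem_sphere_norm_le (C := 1 / 4) one_pos hdc
        (fun w hw => hb w (hcl (Metric.sphere_subset_closedBall hw)))
      simpa using this
    refine ⟨mul_ne_zero hz0 hgne, ?_⟩
    have heq : z * deriv (fun z => z * g z) z / (z * g z) = 1 + z * deriv g z / g z := by
      rw [hderiv z hz]
      field_simp
    rw [heq]
    apply one_add_mem_expD
    rw [norm_div, norm_mul, div_le_iff₀ (by linarith)]
    nlinarith [norm_nonneg z, norm_nonneg (deriv g z)]

theorem le_norm_ascPochhammer (n k : ℕ) :
    (5 / 2 : ℝ) ^ k ≤ ‖(ascPochhammer ℂ k).eval (5 / 2 + (n : ℂ))‖ := by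
  induction k with
  | zero => simp
  | succ k ih =>
    rw [ascPochhammer_succ_eval, norm_mul, pow_succ]
    have h : (5 / 2 : ℂ) + n + k = ((5 / 2 + n + k : ℝ) : ℂ) := by push_cast; ring
    have h2 : (5 / 2 : ℝ) ≤ ‖(5 / 2 : ℂ) + n + k‖ := by
      rw [h, Complex.norm_of_nonneg (by positivity)]
      have : (0 : ℝ) ≤ n := n.cast_nonneg
      have : (0 : ℝ) ≤ k := k.cast_nonneg
      linarith
    gcongr

theorem besselCoeff_bound (n : ℕ) {c : ℂ} (hc : ‖c‖ = 1) (k : ℕ) :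
    ‖(-c / 4) ^ k / ((ascPochhammer ℂ k).eval (5 / 2 + (n : ℂ)) * (k.factorial : ℂ))‖
      ≤ (1 / 10 : ℝ) ^ k := by
  have h1 := le_norm_ascPochhammer n k
  have h2 : (1 : ℝ) ≤ k.factorial := by exact_mod_cast k.factorial_pos
  have h3 : (5 / 2 : ℝ) ^ k ≤
      ‖(ascPochhammer ℂ k).eval (5 / 2 + (n : ℂ))‖ * (k.factorial : ℝ) :=
    h1.trans (le_mul_of_one_le_right (norm_nonneg _) h2)
  have h4 : ‖-c / 4‖ = 1 / 4 := by simp [hc]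
  rw [norm_div, norm_pow, norm_mul, Complex.norm_natCast, h4]
  calc (1 / 4 : ℝ) ^ k / (‖(ascPochhammer ℂ k).eval (5 / 2 + (n : ℂ))‖ * (k.factorial : ℝ))
      ≤ (1 / 4 : ℝ) ^ k / (5 / 2 : ℝ) ^ k := by gcongr
    _ = (1 / 10 : ℝ) ^ k := by rw [← div_pow]; norm_num

theorem bessel_exponential_starlike_family (n : ℕ) :
    IsSe (fun z => z * besselPhi (5 / 2 + (n : ℂ)) 1 z) ∧
      IsSe (fun z => z * besselPhi (5 / 2 + (n : ℂ)) (-1) z) :=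
  ⟨isSe_of_coeff_bound (besselCoeff_bound n (by simp)) (by simp),
    isSe_of_coeff_bound (besselCoeff_bound n (by simp)) (by simp)⟩
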